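/- Let (Ω, 𝔽, P) be a probability space and E a finite-dimensional real inner product space. Let η, η' : Ω → E be square-integrable with E[η] = E[η'] = 0, E[‖η‖²] = E[‖η'‖²] = v, and E[⟨η, η'⟩] = ρ · v for reals v ≥ 0 and ρ. Let μ, μ', ε ∈ E be fixed vectors, r = μ' − μ, let σ_s be real, α_s ≠ 0 real, and β real with β > 0 and β · ‖r‖² < 2(1 − β)(1 − ρ) · v. Define x^{PS} = α_s(μ + η) + σ_s ε, x^{LAMP} = α_s((1 − β)(μ + η) + β(μ' + η')) + σ_s ε, and x^{μ} = α_s μ + σ_s ε. Then E[‖x^{LAMP} − x^{μ}‖²] < E[‖x^{PS} − x^{μ}‖²]. -/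

import Mathlib

open MeasureTheory
open scoped RealInnerProductSpace

/-!
Relative to the target `μ`, the filtered estimate has error `((1 - β) η + β η') + β r`, whose
random part is centered, so its second moment splits off the squared bias `β² ‖r‖²`. Expanding the
random part with `E ⟪η, η'⟫ = ρ v` shows that filtering lowers the squared risk `v` by exactly
`β (2 (1 - β) (1 - ρ) v - β ‖r‖²)`; the posterior update multiplies both risks by `αs²`.
-/

section InnerProduct

variable {Ω : Type*} [MeasurableSpace Ω] {P : Measure Ω} {E : Type*} [NormedAddCommGroup E]

lemma integrable_inner_of_memLp {𝕜 : Type*} [RCLike 𝕜] [InnerProductSpace 𝕜 E]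
    {p q : ENNReal} [p.HolderConjugate q] {f g : Ω → E} (hf : MemLp f p P) (hg : MemLp g q P) :
    Integrable (fun ω => inner 𝕜 (f ω) (g ω)) P :=
  (hf.norm.integrable_mul hg.norm).mono' (hf.1.inner hg.1)
    (.of_forall fun _ => norm_inner_le_norm _ _)

lemma integral_norm_const_smul_pow {𝕜 : Type*} [NormedField 𝕜] [NormedSpace 𝕜 E] (c : 𝕜)
    (f : Ω → E) (n : ℕ) :
    ∫ ω, ‖c • f ω‖ ^ n ∂P = ‖c‖ ^ n * ∫ ω, ‖f ω‖ ^ n ∂P := by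
  simp only [norm_smul, mul_pow, integral_const_mul]

variable [InnerProductSpace ℝ E] {f g : Ω → E}

lemma integral_norm_add_sq (hf : MemLp f 2 P) (hg : MemLp g 2 P) :
    ∫ ω, ‖f ω + g ω‖ ^ 2 ∂P
      = ∫ ω, ‖f ω‖ ^ 2 ∂P + 2 * ∫ ω, ⟪f ω, g ω⟫ ∂P + ∫ ω, ‖g ω‖ ^ 2 ∂P := by
  have hf_sq : Integrable (fun ω => ‖f ω‖ ^ 2) P := hf.integrable_norm_pow two_ne_zero
  have hg_sq : Integrable (fun ω => ‖g ω‖ ^ 2) P := hg.integrable_norm_pow two_ne_zero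
  have h_inner : Integrable (fun ω => 2 * ⟪f ω, g ω⟫) P :=
    (integrable_inner_of_memLp hf hg).const_mul 2
  simp_rw [norm_add_sq_real]
  rw [integral_add (hf_sq.fun_add h_inner) hg_sq, integral_add hf_sq h_inner, integral_const_mul]

lemma integral_norm_smul_add_smul_sq (hf : MemLp f 2 P) (hg : MemLp g 2 P) (a b : ℝ) :
    ∫ ω, ‖a • f ω + b • g ω‖ ^ 2 ∂P
      = a ^ 2 * ∫ ω, ‖f ω‖ ^ 2 ∂P + 2 * a * b * ∫ ω, ⟪f ω, g ω⟫ ∂P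
        + b ^ 2 * ∫ ω, ‖g ω‖ ^ 2 ∂P := by
  have h_inner : ∫ ω, ⟪a • f ω, b • g ω⟫ ∂P = a * b * ∫ ω, ⟪f ω, g ω⟫ ∂P := by
    simp only [real_inner_smul_left, real_inner_smul_right, integral_const_mul]
    ring
  have haf : MemLp (fun ω => a • f ω) 2 P := hf.const_smul a
  have hbg : MemLp (fun ω => b • g ω) 2 P := hg.const_smul b
  rw [integral_norm_add_sq haf hbg, h_inner, integral_norm_const_smul_pow,
    integral_norm_const_smul_pow, Real.norm_eq_abs, Real.norm_eq_abs, sq_abs, sq_abs]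
  ring

variable [CompleteSpace E]

lemma integral_norm_add_const_sq [IsFiniteMeasure P] (hf : MemLp f 2 P) (c : E) :
    ∫ ω, ‖f ω + c‖ ^ 2 ∂P
      = ∫ ω, ‖f ω‖ ^ 2 ∂P + 2 * ⟪∫ ω, f ω ∂P, c⟫ + P.real Set.univ * ‖c‖ ^ 2 := by
  have h_inner : ∫ ω, ⟪f ω, c⟫ ∂P = ⟪∫ ω, f ω ∂P, c⟫ := by
    simp only [real_inner_comm c, integral_inner (hf.integrable one_le_two)]
  rw [integral_norm_add_sq hf (memLp_const c), h_inner, integral_const, smul_eq_mul]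

end InnerProduct

lemma integral_norm_filtered_error_sq {Ω : Type*} [MeasurableSpace Ω] {P : Measure Ω}
    [IsProbabilityMeasure P] {E : Type*} [NormedAddCommGroup E] [InnerProductSpace ℝ E]
    [CompleteSpace E] {η η' : Ω → E} (hη : MemLp η 2 P) (hη' : MemLp η' 2 P)
    (hmean : ∫ ω, η ω ∂P = 0) (hmean' : ∫ ω, η' ω ∂P = 0) {v ρ : ℝ}
    (hv1 : ∫ ω, ‖η ω‖ ^ 2 ∂P = v) (hv2 : ∫ ω, ‖η' ω‖ ^ 2 ∂P = v)
    (hcov : ∫ ω, ⟪η ω, η' ω⟫ ∂P = ρ * v) (r : E) (β : ℝ) :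
    ∫ ω, ‖(1 - β) • η ω + β • η' ω + β • r‖ ^ 2 ∂P
      = v - β * (2 * (1 - β) * (1 - ρ) * v - β * ‖r‖ ^ 2) := by
  have h_memLp : MemLp (fun ω => (1 - β) • η ω + β • η' ω) 2 P :=
    (hη.const_smul (1 - β)).add (hη'.const_smul β)
  have h_centered : ∫ ω, (1 - β) • η ω + β • η' ω ∂P = 0 := by
    rw [integral_add ((hη.integrable one_le_two).fun_smul _)
      ((hη'.integrable one_le_two).fun_smul _), integral_smul, integral_smul, hmean, hmean',
      smul_zero, smul_zero, add_zero]
  rw [integral_norm_add_const_sq h_memLp, h_centered, inner_zero_left, probReal_univ,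
    integral_norm_smul_add_smul_sq hη hη', hv1, hv2, hcov, norm_smul, mul_pow, Real.norm_eq_abs,
    sq_abs]
  ring

theorem lamp_one_step_risk_comparison_general
    {Ω : Type*} [MeasurableSpace Ω] (P : Measure Ω) [IsProbabilityMeasure P]
    {E : Type*} [NormedAddCommGroup E] [InnerProductSpace ℝ E] [CompleteSpace E]
    (η η' : Ω → E) (hη : MemLp η 2 P) (hη' : MemLp η' 2 P)
    (hmean : ∫ ω, η ω ∂P = 0) (hmean' : ∫ ω, η' ω ∂P = 0)
    (v ρ : ℝ) (hv1 : ∫ ω, ‖η ω‖ ^ 2 ∂P = v)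
    (hv2 : ∫ ω, ‖η' ω‖ ^ 2 ∂P = v) (hcov : ∫ ω, ⟪η ω, η' ω⟫ ∂P = ρ * v)
    (μ μ' ε : E) (r : E) (hr : r = μ' - μ) (σs : ℝ) (αs : ℝ) (hαs : αs ≠ 0)
    (β : ℝ) (hβ : 0 < β)
    (xPS : Ω → E) (hxPS : ∀ ω, xPS ω = αs • (μ + η ω) + σs • ε)
    (xLAMP : Ω → E)
    (hxLAMP : ∀ ω, xLAMP ω = αs • ((1 - β) • (μ + η ω) + β • (μ' + η' ω)) + σs • ε)
    (xμ : E) (hxμ : xμ = αs • μ + σs • ε) :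
    ∫ ω, ‖xLAMP ω - xμ‖ ^ 2 ∂P < ∫ ω, ‖xPS ω - xμ‖ ^ 2 ∂P ↔
      β * ‖r‖ ^ 2 < 2 * (1 - β) * (1 - ρ) * v := by
  have hPS_error (ω : Ω) : xPS ω - xμ = αs • η ω := by
    rw [hxPS, hxμ]
    module
  have hLAMP_error (ω : Ω) :
      xLAMP ω - xμ = αs • ((1 - β) • η ω + β • η' ω + β • r) := by
    rw [hxLAMP, hxμ, hr]
    module
  simp_rw [hPS_error, hLAMP_error]
  rw [integral_norm_const_smul_pow, integral_norm_const_smul_pow,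
    integral_norm_filtered_error_sq hη hη' hmean hmean' hv1 hv2 hcov, hv1,
    mul_lt_mul_iff_right₀ (pow_pos (norm_pos_iff.2 hαs) 2), sub_lt_self_iff,
    mul_pos_iff_of_pos_left hβ, sub_pos]

/-- One-step risk comparison: LAMP beats the base posterior sampler whenever
`β ‖r‖² < 2 (1-β)(1-ρ) v`. -/
theorem lamp_one_step_risk_comparison
    {Ω : Type*} [MeasurableSpace Ω] (P : Measure Ω) [IsProbabilityMeasure P]
    {E : Type*} [NormedAddCommGroup E] [InnerProductSpace ℝ E] [FiniteDimensional ℝ E]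
    (η η' : Ω → E) (hη : MemLp η 2 P) (hη' : MemLp η' 2 P)
    (hmean : ∫ ω, η ω ∂P = 0) (hmean' : ∫ ω, η' ω ∂P = 0)
    (v ρ : ℝ) (hv : 0 ≤ v)
    (hv1 : ∫ ω, ‖η ω‖ ^ 2 ∂P = v) (hv2 : ∫ ω, ‖η' ω‖ ^ 2 ∂P = v)
    (hcov : ∫ ω, ⟪η ω, η' ω⟫ ∂P = ρ * v)
    (μ μ' ε : E) (r : E) (hr : r = μ' - μ) (σs : ℝ) (αs : ℝ) (hαs : αs ≠ 0)
    (β : ℝ) (hβ : 0 < β)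
    (hcond : β * ‖r‖ ^ 2 < 2 * (1 - β) * (1 - ρ) * v)
    (xPS : Ω → E) (hxPS : ∀ ω, xPS ω = αs • (μ + η ω) + σs • ε)
    (xLAMP : Ω → E)
    (hxLAMP : ∀ ω, xLAMP ω = αs • ((1 - β) • (μ + η ω) + β • (μ' + η' ω)) + σs • ε)
    (xμ : E) (hxμ : xμ = αs • μ + σs • ε) :
    ∫ ω, ‖xLAMP ω - xμ‖ ^ 2 ∂P < ∫ ω, ‖xPS ω - xμ‖ ^ 2 ∂P :=
  (lamp_one_step_risk_comparison_general P η η' hη hη' hmean hmean' v ρ hv1 hv2 hcov μ μ' ε r hr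
    σs αs hαs β hβ xPS hxPS xLAMP hxLAMP xμ hxμ).2 hcond
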